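/- arXiv:2411.08009 — 4 statements merged into one kernel-verified Lean document; each statement's English description precedes it below -/
import Mathlib

section
/- Let (L, K) be a simplicial pair. Then K (viewed via the identification of each vertex of K with its singleton simplex) is a full subcomplex of the relative barycentric subdivision b(L, K); moreover, if K is flag, then b(L, K) is flag. -/
/-!
The members of a face `R` of `b(L, K)` sort themselves: those that lie in `K` are singletons `{v}`
with `v` in one common simplex `τ` of `K`, and those outside `K` form a chain of simplices of `L`
all containing `τ` (`relbary_split`). Fullness follows at once, because a face whose members all
lie in `K` has an empty chain part.

For flagness, let `S` be a set of pairwise adjacent vertices of `b(L, K)`. Being a chain of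
simplices outside `K`, and containing the vertices from `K`, are conditions on pairs, hence can be
read off from the edges. The only condition that is not about pairs is that the vertices from `K`
span a simplex of `K`; since they are pairwise joined by edges of `K`, this is the flagness of `K`.
-/

open scoped Classical

noncomputable section

/-- A collection of finite subsets of the vertex type `V` (the faces). -/
abbrev SCplx (V : Type) : Type := Set (Finset V)

/-- `L` is an abstract simplicial complex: every face is nonempty, and faces are
closed under passing to nonempty subsets. -/
def IsComplex {V : Type} (L : SCplx V) : Prop :=
  (∀ s ∈ L, s.Nonempty) ∧ ∀ s ∈ L, ∀ t : Finset V, t ⊆ s → t.Nonempty → t ∈ L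

/-- The vertex set of a complex. -/
def verts {V : Type} (L : SCplx V) : Set V := {v | ({v} : Finset V) ∈ L}

/-- `e` is an edge of `L`: a face with two elements. -/
def IsEdge {V : Type} (L : SCplx V) (e : Finset V) : Prop := e ∈ L ∧ e.card = 2

/-- The link of a simplex `σ`. -/
def link {V : Type} (L : SCplx V) (σ : Finset V) : SCplx V :=
  {τ | τ ∈ L ∧ Disjoint τ σ ∧ τ ∪ σ ∈ L}

/-- `L` is flag: every nonempty finite set of vertices which are pairwise joined
by edges of `L` is a face of `L`. -/
def FlagCplx {V : Type} (L : SCplx V) : Prop :=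
  ∀ s : Finset V, s.Nonempty → (∀ v ∈ s, ({v} : Finset V) ∈ L) →
    (∀ u ∈ s, ∀ v ∈ s, u ≠ v → ({u, v} : Finset V) ∈ L) → s ∈ L

/-- Simplicial isomorphism: a bijection of vertex sets carrying simplices to
simplices in both directions. -/
def Isom {V W : Type} (L : SCplx V) (L' : SCplx W) : Prop :=
  ∃ f : V → W, Set.BijOn f (verts L) (verts L') ∧
    (∀ s ∈ L, s.image f ∈ L') ∧ (∀ t ∈ L', ∃ s ∈ L, s.image f = t)

/-- Edge subdivision of `L` along the edge `e`; the new vertex `v_e` is `none`. -/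
def subdiv {V : Type} (L : SCplx V) (e : Finset V) : SCplx (Option V) :=
  {σ | ∃ τ ∈ L, ¬ e ⊆ τ ∧ σ = τ.image some} ∪
    {σ | ∃ τ f : Finset V, (τ = ∅ ∨ τ ∈ link L e) ∧ f ⊂ e ∧
      σ = insert none ((τ ∪ f).image some)}

/-- `IterSub L L'` : `L'` is an iterated edge subdivision of `L`, that is, there is
a chain `L = L₀, L₁, …, L_m` with `L_{i+1} = Sub_{e_i}(L_i)` and `L_m ≅ L'`. -/
inductive IterSub : {V : Type} → SCplx V → {W : Type} → SCplx W → Prop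
  | iso {V W : Type} {L : SCplx V} {L' : SCplx W} : Isom L L' → IterSub L L'
  | step {V W : Type} {L : SCplx V} {L' : SCplx W} (e : Finset V) :
      IsEdge L e → IterSub (subdiv L e) L' → IterSub L L'

/-- The relative barycentric subdivision `b(L, K)`: vertices are the simplices of
`L ∖ K` (barycenters) together with the vertices of `K` (as singleton simplices);
faces are spanned by chains of simplices of `L` with at most one member in `K`. -/
def relbary {V : Type} (L K : SCplx V) : SCplx (Finset V) :=
  {S | S.Nonempty ∧ ∃ (τ : Finset V) (c : Finset (Finset V)),
    (τ = ∅ ∨ τ ∈ K) ∧ (∀ σ ∈ c, σ ∈ L ∧ σ ∉ K) ∧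
    (∀ σ ∈ c, ∀ σ' ∈ c, σ ⊆ σ' ∨ σ' ⊆ σ) ∧ (∀ σ ∈ c, τ ⊆ σ) ∧
    S = τ.image (fun v => ({v} : Finset V)) ∪ c}

/-- The join of two complexes on disjoint vertex sets. -/
def join {V W : Type} (L₁ : SCplx V) (L₂ : SCplx W) : SCplx (V ⊕ W) :=
  {s | ∃ (s₁ : Finset V) (s₂ : Finset W), (s₁ = ∅ ∨ s₁ ∈ L₁) ∧ (s₂ = ∅ ∨ s₂ ∈ L₂) ∧
    (s₁.Nonempty ∨ s₂.Nonempty) ∧ s = s₁.image Sum.inl ∪ s₂.image Sum.inr}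

/-- The two-point complex `S⁰` (two vertices, no edge). -/
def S0 : SCplx Bool := {s | s = {true} ∨ s = {false}}

/-- The suspension of `L` : the join of `L` with `S⁰`. -/
def susp {V : Type} (L : SCplx V) : SCplx (V ⊕ Bool) := join L S0

/-- The cone on `L`, with cone vertex `none`. -/
def cone {V : Type} (L : SCplx V) : SCplx (Option V) :=
  {σ | ∃ τ : Finset V, (τ = ∅ ∨ τ ∈ L) ∧
    ((τ.Nonempty ∧ σ = τ.image some) ∨ σ = insert none (τ.image some))}

/-- The boundary of the `n`-simplex : all nonempty proper subsets of an
`(n+1)`-element vertex set. -/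
def bdSimplex (n : ℕ) : SCplx (Fin (n + 1)) :=
  {s | s.Nonempty ∧ s ≠ Finset.univ}

/-- The boundary complex `∂σ` of a simplex `σ` : proper nonempty subsets of `σ`. -/
def bdry {V : Type} (σ : Finset V) : SCplx V := {t | t ⊂ σ ∧ t.Nonempty}

/-- The boundary of the `n`-octahedron, i.e. the `n`-fold join `S⁰ * ⋯ * S⁰`. -/
def octa (n : ℕ) : SCplx (Fin n × Bool) :=
  {s | s.Nonempty ∧
    ∀ i : Fin n, ¬ (((i, true) : Fin n × Bool) ∈ s ∧ ((i, false) : Fin n × Bool) ∈ s)}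

end

/-- `A` is a full subcomplex of `L`: a subcomplex such that every simplex of `L`
all of whose vertices lie in `A` belongs to `A`. -/
def IsFullSub {V : Type} (A L : SCplx V) : Prop :=
  A ⊆ L ∧ ∀ s ∈ L, (∀ v ∈ s, ({v} : Finset V) ∈ A) → s ∈ A

/-- A face of `b(L, K)` is determined by its members in `K`, which are the vertices of a simplex
`τ`, and its members outside `K`, which form a chain above `τ`. -/
lemma relbary_split {V : Type} {L K : SCplx V} (hK : IsComplex K) {R : Finset (Finset V)}
    (hR : R ∈ relbary L K) :
    ∃ τ : Finset V, (τ = ∅ ∨ τ ∈ K) ∧ (∀ A ∈ R, A ∈ K → ∃ v ∈ τ, A = {v}) ∧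
      (∀ v ∈ τ, ({v} : Finset V) ∈ R) ∧
      (∀ A ∈ R, A ∉ K → A ∈ L ∧ τ ⊆ A ∧ ∀ B ∈ R, B ∉ K → A ⊆ B ∨ B ⊆ A) := by
  obtain ⟨-, τ, c, hτ, hc, hchain, hτc, rfl⟩ := hR
  have hsing : ∀ v ∈ τ, ({v} : Finset V) ∈ K := by
    intro v hv
    rcases hτ with rfl | hτ
    · simp at hv
    · exact hK.2 τ hτ _ (by simpa using hv) (Finset.singleton_nonempty v)
  have hmem : ∀ A ∈ τ.image (fun v => ({v} : Finset V)) ∪ c, A ∉ K → A ∈ c := by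
    intro A hA hAK
    rcases Finset.mem_union.1 hA with h | h
    · obtain ⟨v, hv, rfl⟩ := Finset.mem_image.1 h
      exact absurd (hsing v hv) hAK
    · exact h
  refine ⟨τ, hτ, ?_, ?_, ?_⟩
  · intro A hA hAK
    rcases Finset.mem_union.1 hA with h | h
    · obtain ⟨v, hv, rfl⟩ := Finset.mem_image.1 h
      exact ⟨v, hv, rfl⟩
    · exact absurd hAK (hc A h).2
  · exact fun v hv => Finset.mem_union_left _ (Finset.mem_image_of_mem _ hv)
  · intro A hA hAK
    have hAc := hmem A hA hAK
    exact ⟨(hc A hAc).1, hτc A hAc, fun B hB hBK => hchain A hAc B (hmem B hB hBK)⟩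

/-- for a simplicial pair `(L, K)`, the copy of `K` inside the
relative barycentric subdivision `b(L, K)` (each vertex of `K` identified with
its singleton simplex) is a full subcomplex; moreover if `K` is flag then
`b(L, K)` is flag. -/
theorem relbary_full_and_flag
    {V : Type} [Fintype V] (L K : SCplx V)
    (hL : IsComplex L) (hKL : K ⊆ L) (hK : IsComplex K) :
    IsFullSub ((fun s : Finset V => s.image (fun v => ({v} : Finset V))) '' K)
      (relbary L K) ∧
    (FlagCplx K → FlagCplx (relbary L K)) := by
  refine ⟨⟨?_, ?_⟩, ?_⟩
  · rintro _ ⟨s, hs, rfl⟩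
    exact ⟨(hK.1 s hs).image _, s, ∅, Or.inr hs, by simp, by simp, by simp, by simp⟩
  · intro S hS hv
    have hSK : ∀ A ∈ S, A ∈ K := by
      intro A hA
      obtain ⟨s, hs, hsA⟩ := hv A hA
      obtain ⟨v, hvs⟩ := hK.1 s hs
      have hvA : ({v} : Finset V) ∈ ({A} : Finset (Finset V)) := by
        rw [← hsA]
        exact Finset.mem_image_of_mem _ hvs
      rw [← Finset.mem_singleton.1 hvA]
      exact hK.2 s hs _ (by simpa using hvs) (Finset.singleton_nonempty v)
    obtain ⟨τ, hτ, hsing, hτS, -⟩ := relbary_split hK hS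
    obtain ⟨A, hA⟩ := hS.1
    obtain ⟨v, hv, -⟩ := hsing A hA (hSK A hA)
    refine ⟨τ, hτ.resolve_left (Finset.ne_empty_of_mem hv), ?_⟩
    ext B
    simp only [Finset.mem_image]
    constructor
    · rintro ⟨w, hw, rfl⟩
      exact hτS w hw
    · intro hB
      obtain ⟨w, hw, rfl⟩ := hsing B hB (hSK B hB)
      exact ⟨w, hw, rfl⟩
  · intro hflag S hne hvert hedge
    -- Treating `A = B` as a degenerate edge lets every pairwise condition be checked uniformly.
    have hpair : ∀ A ∈ S, ∀ B ∈ S, ({A, B} : Finset (Finset V)) ∈ relbary L K := by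
      intro A hA B hB
      by_cases h : A = B
      · subst h
        simpa using hvert A hA
      · convert hedge A hA B hB h
    let τ : Finset V := Finset.univ.filter (fun v => ({v} : Finset V) ∈ S ∧ ({v} : Finset V) ∈ K)
    have hmemτ : ∀ v, v ∈ τ ↔ ({v} : Finset V) ∈ S ∧ ({v} : Finset V) ∈ K := by
      intro v
      simp [τ]
    refine ⟨hne, τ, S.filter (fun A => A ∉ K), ?_, ?_, ?_, ?_, ?_⟩
    · rcases τ.eq_empty_or_nonempty with h | h
      · exact Or.inl h
      refine Or.inr (hflag τ h (fun v hv => ((hmemτ v).1 hv).2) ?_)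
      intro u hu v hv _
      obtain ⟨huS, huK⟩ := (hmemτ u).1 hu
      obtain ⟨hvS, hvK⟩ := (hmemτ v).1 hv
      obtain ⟨ρ, hρ, hsing, -, -⟩ := relbary_split hK (hpair _ huS _ hvS)
      obtain ⟨u', hu', hu''⟩ := hsing {u} (by simp) huK
      obtain ⟨v', hv', hv''⟩ := hsing {v} (by simp) hvK
      obtain rfl := Finset.singleton_injective hu''
      obtain rfl := Finset.singleton_injective hv''
      have hρK := hρ.resolve_left (Finset.ne_empty_of_mem hu')
      refine hK.2 ρ hρK _ ?_ (Finset.insert_nonempty _ _)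
      exact Finset.insert_subset hu' (Finset.singleton_subset_iff.2 hv')
    · intro A hA
      obtain ⟨hAS, hAK⟩ := Finset.mem_filter.1 hA
      obtain ⟨_, -, -, -, h⟩ := relbary_split hK (hpair A hAS A hAS)
      exact ⟨(h A (by simp) hAK).1, hAK⟩
    · intro A hA B hB
      obtain ⟨hAS, hAK⟩ := Finset.mem_filter.1 hA
      obtain ⟨hBS, hBK⟩ := Finset.mem_filter.1 hB
      obtain ⟨_, -, -, -, h⟩ := relbary_split hK (hpair A hAS B hBS)
      exact (h A (by simp) hAK).2.2 B (by simp) hBK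
    · intro A hA v hv
      obtain ⟨hAS, hAK⟩ := Finset.mem_filter.1 hA
      obtain ⟨hvS, hvK⟩ := (hmemτ v).1 hv
      obtain ⟨ρ, -, hsing, -, h⟩ := relbary_split hK (hpair _ hvS A hAS)
      obtain ⟨w, hw, hvw⟩ := hsing {v} (by simp) hvK
      obtain rfl := Finset.singleton_injective hvw
      exact (h A (by simp) hAK).2.1 hw
    · ext A
      simp only [Finset.mem_union, Finset.mem_image, Finset.mem_filter]
      constructor
      · intro hA
        by_cases hAK : A ∈ K
        · obtain ⟨_, -, hsing, -, -⟩ := relbary_split hK (hpair A hA A hA)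
          obtain ⟨v, -, rfl⟩ := hsing A (by simp) hAK
          exact Or.inl ⟨v, (hmemτ v).2 ⟨hA, hAK⟩, rfl⟩
        · exact Or.inr ⟨hA, hAK⟩
      · rintro (⟨v, hv, rfl⟩ | ⟨hA, -⟩)
        · exact ((hmemτ v).1 hv).1
        · exact hA
end

section
/- Let n ≥ 2 and let L be a connected n-dimensional flag simplicial complex such that the link of every vertex of L is isomorphic to 3^{*n}, the n-fold join of the three-point complex with itself. Then L is isomorphic to 3^{*(n+1)}. -/
/-!
A flag complex is determined by its edges, so the statement concerns graphs: a connected graph in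
which every neighbourhood `N(v)` is complete multipartite with `n ≥ 2` parts of size three is
itself complete multipartite with `n + 1` parts of size three. The passage between complexes and
graphs is `exists_chart_of_isom_link` and `isom_of_chart`.

Fix a vertex `v`. For a neighbour `a` of `v`, let `T a` be the part of `v` in `N(a)`, that is, the
set of neighbours of `a` not adjacent to `v`. If `a` and `b` are adjacent neighbours of `v`, then
`b` is in `N(a)` and in another part than `v`, hence is adjacent to all of `T a`; so `T a ⊆ T b`.
Two neighbours of `v` have a common neighbour in `N(v)` or are adjacent, because there are at least
two parts; so `T a` is independent of `a` (`nonNbrs_subset`). Each `u` in this common set `T` is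
therefore adjacent to all of `N(v)`, and `N(u) = N(v)` since both have `3n` elements
(`nbrs_eq_of_mem_nonNbrs`). Thus `T ∪ N(v)` is closed under adjacency and, by connectedness, is the
whole vertex set; `T` is the additional part.
-/

open scoped Classical

/-- The `n`-fold join `3^{*n}` of the three-point complex (three vertices, no
edges) with itself: faces are the nonempty sets hitting each factor at most once. -/
def threeJoin (n : ℕ) : SCplx (Fin n × Fin 3) :=
  {s | s.Nonempty ∧
    ∀ (i : Fin n) (j j' : Fin 3),
      ((i, j) : Fin n × Fin 3) ∈ s → ((i, j') : Fin n × Fin 3) ∈ s → j = j'}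

/-- Two vertices are joined by an edge of `L`. -/
def EdgeRel {V : Type} (L : SCplx V) (u v : V) : Prop :=
  u ≠ v ∧ ({u, v} : Finset V) ∈ L

/-- `L` is connected: any two vertices are joined by a path of edges. -/
def ConnCplx {V : Type} (L : SCplx V) : Prop :=
  ∀ u ∈ verts L, ∀ v ∈ verts L, Relation.ReflTransGen (EdgeRel L) u v


/-- The set of vertices joined to `v` by an edge of `L`. -/
def nbrs {V : Type} (L : SCplx V) (v : V) : Set V := {u | EdgeRel L v u}

/-- The neighbours of `a` that are not adjacent to `v`. When `v` is a neighbour of `a` and the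
neighbourhood of `a` is multipartite, this is the part of `v` in it. -/
def nonNbrs {V : Type} (L : SCplx V) (v a : V) : Set V := {u | EdgeRel L a u ∧ ¬ EdgeRel L v u}

/-- `f` identifies the graph induced by the edges of `L` on `S` with the complete multipartite graph
with `m` parts of size three: the first coordinate is the part of a vertex. -/
structure IsChart {V : Type} (L : SCplx V) (S : Set V) (m : ℕ) (f : V → Fin m × Fin 3) : Prop where
  bij : Set.BijOn f S Set.univ
  adj : ∀ x ∈ S, ∀ y ∈ S, EdgeRel L x y ↔ (f x).1 ≠ (f y).1

section

variable {V : Type} {L : SCplx V}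

/-! ### From complexes to graphs and back -/

theorem EdgeRel.symm' {u v : V} (h : EdgeRel L u v) : EdgeRel L v u :=
  ⟨h.1.symm, by rw [Finset.pair_comm]; exact h.2⟩

theorem EdgeRel.right_mem (hL : IsComplex L) {u v : V} (h : EdgeRel L u v) : v ∈ verts L :=
  hL.2 _ h.2 {v} (by simp) (by simp)

/-- `Isom` is stated with classical decidability of equality on the target; this restates it for an
arbitrary instance, such as the one on `Fin n × Fin 3`. -/
theorem isom_iff {W : Type} [inst : DecidableEq W] {L' : SCplx W} : Isom L L' ↔
    ∃ f : V → W, Set.BijOn f (verts L) (verts L') ∧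
      (∀ s ∈ L, s.image f ∈ L') ∧ (∀ t ∈ L', ∃ s ∈ L, s.image f = t) := by
  obtain rfl : inst = fun a b => Classical.propDecidable (a = b) := Subsingleton.elim _ _
  exact Iff.rfl

theorem verts_threeJoin (n : ℕ) : verts (threeJoin n) = Set.univ := by
  ext ⟨i, j⟩
  simp only [verts, threeJoin, Set.mem_ofPred_eq, Set.mem_univ, iff_true]
  refine ⟨by simp, fun i j j' h h' => ?_⟩
  simp only [Finset.mem_singleton, Prod.mk.injEq] at h h'
  exact h.2.trans h'.2.symm

theorem verts_link (hL : IsComplex L) (v : V) : verts (link L {v}) = nbrs L v := by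
  ext u
  simp only [verts, link, nbrs, EdgeRel, Set.mem_ofPred_eq, Finset.disjoint_singleton]
  have e : ({u} : Finset V) ∪ {v} = {v, u} := by ext; simp [or_comm]
  rw [e]
  exact ⟨fun h => ⟨h.2.1.symm, h.2.2⟩,
    fun h => ⟨hL.2 _ h.2 {u} (by simp) (by simp), h.1.symm, h.2⟩⟩

/-- Adjacent neighbours `x`, `y` of `v` span an edge of the link, because `L` is flag and thus
contains the triangle `x`, `y`, `v`. -/
theorem pair_mem_link (hL : IsComplex L) (hflag : FlagCplx L) {v x y : V}
    (hx : EdgeRel L v x) (hy : EdgeRel L v y) (h : EdgeRel L x y) :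
    ({x, y} : Finset V) ∈ link L {v} := by
  have hvx := hx.1
  have hvy := hy.1
  refine ⟨h.2, by simp [hvx, hvy], hflag _ (by simp) ?_ ?_⟩
  · intro w hw
    simp only [Finset.mem_union, Finset.mem_insert, Finset.mem_singleton] at hw
    rcases hw with (rfl | rfl) | rfl
    · exact hx.right_mem hL
    · exact hy.right_mem hL
    · exact hx.symm'.right_mem hL
  · intro a ha b hb hab
    simp only [Finset.mem_union, Finset.mem_insert, Finset.mem_singleton] at ha hb
    rcases ha with (rfl | rfl) | rfl <;> rcases hb with (rfl | rfl) | rfl <;>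
      first
      | exact absurd rfl hab
      | exact h.2
      | exact h.symm'.2
      | exact hx.2
      | exact hx.symm'.2
      | exact hy.2
      | exact hy.symm'.2

theorem exists_chart_of_isom_link (hL : IsComplex L) (hflag : FlagCplx L) {v : V} {n : ℕ}
    (h : Isom (link L ({v} : Finset V)) (threeJoin n)) :
    ∃ f, IsChart L (nbrs L v) n f := by
  obtain ⟨f, hbij, hto, hfrom⟩ := isom_iff.1 h
  rw [verts_link hL, verts_threeJoin] at hbij
  refine ⟨f, hbij, fun x hx y hy => ⟨fun hxy heq => ?_, fun hne => ?_⟩⟩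
  · have h2 := (hto _ (pair_mem_link hL hflag hx hy hxy)).2 (f x).1 (f x).2 (f y).2
      (by simp) (by rw [heq]; simp)
    exact hxy.1 (hbij.injOn hx hy (Prod.ext heq h2))
  · have hmem : ({f x, f y} : Finset (Fin n × Fin 3)) ∈ threeJoin n := by
      refine ⟨by simp, fun i j j' h1 h2 => ?_⟩
      simp only [Finset.mem_insert, Finset.mem_singleton] at h1 h2
      rcases h1 with h1 | h1 <;> rcases h2 with h2 | h2
      · exact (Prod.ext_iff.1 (h1.trans h2.symm)).2
      · exact absurd (by rw [← h1, ← h2]) hne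
      · exact absurd (by rw [← h1, ← h2]) hne
      · exact (Prod.ext_iff.1 (h1.trans h2.symm)).2
    obtain ⟨s, hs, hst⟩ := hfrom _ hmem
    -- every vertex of `s` is a neighbour of `v`, so injectivity of `f` applies to it
    have hsN : ∀ w ∈ s, w ∈ nbrs L v := by
      intro w hw
      refine ⟨?_, hL.2 _ hs.2.2 _ ?_ (by simp)⟩
      · rintro rfl
        exact Finset.disjoint_left.1 hs.2.1 hw (by simp)
      · intro z hz
        simp only [Finset.mem_insert, Finset.mem_singleton] at hz
        rcases hz with rfl | rfl <;> simp [hw]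
    have key : ∀ z ∈ nbrs L v, f z ∈ ({f x, f y} : Finset (Fin n × Fin 3)) → z ∈ s := by
      intro z hz hfz
      rw [← hst, Finset.mem_image] at hfz
      obtain ⟨w, hw, hwz⟩ := hfz
      rwa [← hbij.injOn (hsN w hw) hz hwz]
    refine ⟨fun hxy => hne (by rw [hxy]), hL.2 _ hs.1 _ ?_ (by simp)⟩
    intro z hz
    simp only [Finset.mem_insert, Finset.mem_singleton] at hz
    rcases hz with rfl | rfl
    · exact key _ hx (by simp)
    · exact key _ hy (by simp)

theorem isom_of_chart [Fintype V] (hL : IsComplex L) (hflag : FlagCplx L) {m : ℕ}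
    {F : V → Fin m × Fin 3} (hF : IsChart L (verts L) m F) : Isom L (threeJoin m) := by
  have hv : ∀ s ∈ L, ∀ x ∈ s, x ∈ verts L := fun s hs x hx =>
    hL.2 s hs {x} (by simpa using hx) (by simp)
  refine isom_iff.2 ⟨F, by rw [verts_threeJoin]; exact hF.bij, fun s hs => ?_, fun t ht => ?_⟩
  · refine ⟨(hL.1 s hs).image F, fun i j j' h h' => ?_⟩
    obtain ⟨x, hx, hxi⟩ := Finset.mem_image.1 h
    obtain ⟨y, hy, hyi⟩ := Finset.mem_image.1 h'
    by_contra hne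
    have hxy : x ≠ y := by
      rintro rfl
      rw [hxi] at hyi
      exact hne (by simpa using hyi)
    refine (hF.adj x (hv s hs x hx) y (hv s hs y hy)).1 ⟨hxy, hL.2 s hs _ ?_ (by simp)⟩
      (by rw [hxi, hyi])
    intro z hz
    simp only [Finset.mem_insert, Finset.mem_singleton] at hz
    rcases hz with rfl | rfl <;> assumption
  · have himg : (Finset.univ.filter fun x => x ∈ verts L ∧ F x ∈ t).image F = t := by
      ext p
      simp only [Finset.mem_image, Finset.mem_filter, Finset.mem_univ, true_and]
      constructor
      · rintro ⟨x, ⟨-, hx⟩, rfl⟩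
        exact hx
      · intro hp
        obtain ⟨x, hx, rfl⟩ := hF.bij.surjOn (Set.mem_univ p)
        exact ⟨x, ⟨hx, hp⟩, rfl⟩
    refine ⟨_, hflag _ ?_ ?_ ?_, himg⟩
    · exact Finset.image_nonempty.1 (by rw [himg]; exact ht.1)
    · intro x hx
      exact (Finset.mem_filter.1 hx).2.1
    · intro x hx y hy hxy
      obtain ⟨-, hx, hxt⟩ := Finset.mem_filter.1 hx
      obtain ⟨-, hy, hyt⟩ := Finset.mem_filter.1 hy
      refine ((hF.adj x hx y hy).2 fun heq => hxy (hF.bij.injOn hx hy ?_)).2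
      exact Prod.ext heq (ht.2 (F x).1 (F x).2 (F y).2 hxt (by rw [heq]; exact hyt))

/-! ### Graphs with complete multipartite neighbourhoods -/

/-- Inside the neighbourhood of `a`, a vertex is non-adjacent to `v` exactly when it lies in the
part of `v`. -/
theorem mem_nonNbrs_iff {v a : V} {n : ℕ} {f : V → Fin n × Fin 3} (hf : IsChart L (nbrs L a) n f)
    (hva : EdgeRel L v a) {u : V} (hu : EdgeRel L a u) :
    u ∈ nonNbrs L v a ↔ (f u).1 = (f v).1 := by
  have := hf.adj v hva.symm' u hu
  simp only [nonNbrs, Set.mem_ofPred_eq, hu, true_and, this, not_not]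
  exact eq_comm

theorem nonNbrs_subset_of_adj {n : ℕ} (hL : IsComplex L)
    (hcharts : ∀ v ∈ verts L, ∃ f, IsChart L (nbrs L v) n f) {v a b : V} (hva : EdgeRel L v a)
    (hvb : EdgeRel L v b) (hab : EdgeRel L a b) : nonNbrs L v a ⊆ nonNbrs L v b := by
  obtain ⟨f, hf⟩ := hcharts a (hva.right_mem hL)
  intro u hu
  have h1 := (mem_nonNbrs_iff hf hva hu.1).1 hu
  have h2 := (hf.adj v hva.symm' b hab).1 hvb
  exact ⟨(hf.adj b hab u hu.1).2 (by rw [h1]; exact h2.symm), hu.2⟩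

/-- The set `nonNbrs L v a` is the same for all neighbours `a` of `v`: two neighbours of `v` are
adjacent or, as there are at least two parts, have a common neighbour in `nbrs L v`. -/
theorem nonNbrs_subset {n : ℕ} (hn : 2 ≤ n) (hL : IsComplex L)
    (hcharts : ∀ v ∈ verts L, ∃ f, IsChart L (nbrs L v) n f) {v a b : V} (hva : EdgeRel L v a)
    (hvb : EdgeRel L v b) : nonNbrs L v a ⊆ nonNbrs L v b := by
  obtain ⟨g, hg⟩ := hcharts v (hva.symm'.right_mem hL)
  by_cases hab : EdgeRel L a b
  · exact nonNbrs_subset_of_adj hL hcharts hva hvb hab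
  have hpart : (g a).1 = (g b).1 := not_not.1 fun h => hab ((hg.adj a hva b hvb).2 h)
  have : Nontrivial (Fin n) := Fin.nontrivial_iff_two_le.2 hn
  obtain ⟨i, hi⟩ := exists_ne (g a).1
  obtain ⟨c, hvc, hc⟩ := hg.bij.surjOn (Set.mem_univ (i, 0))
  have hac : EdgeRel L a c := (hg.adj a hva c hvc).2 (by rw [hc]; exact hi.symm)
  have hcb : EdgeRel L c b := (hg.adj c hvc b hvb).2 (by rw [hc, ← hpart]; exact hi)
  exact (nonNbrs_subset_of_adj hL hcharts hva hvc hac).trans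
    (nonNbrs_subset_of_adj hL hcharts hvc hvb hcb)

theorem ncard_nbrs {n : ℕ} {v : V} {f : V → Fin n × Fin 3} (hf : IsChart L (nbrs L v) n f) :
    (nbrs L v).ncard = n * 3 := by
  rw [← hf.bij.injOn.ncard_image, hf.bij.image_eq, Set.ncard_univ]
  simp

/-- By `nonNbrs_subset` the neighbourhood of `u` contains that of `v`; both have `3n` elements. -/
theorem nbrs_eq_of_mem_nonNbrs [Finite V] {n : ℕ} (hn : 2 ≤ n) (hL : IsComplex L)
    (hcharts : ∀ v ∈ verts L, ∃ f, IsChart L (nbrs L v) n f) {v a u : V} (hva : EdgeRel L v a)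
    (hu : u ∈ nonNbrs L v a) : nbrs L u = nbrs L v := by
  obtain ⟨f, hf⟩ := hcharts v (hva.symm'.right_mem hL)
  obtain ⟨g, hg⟩ := hcharts u (hu.1.right_mem hL)
  refine (Set.eq_of_subset_of_ncard_le (fun b hb => ?_) ?_ (Set.toFinite _)).symm
  · exact (nonNbrs_subset hn hL hcharts hva hb hu).1.symm'
  · rw [ncard_nbrs hf, ncard_nbrs hg]

theorem verts_eq_union [Finite V] {n : ℕ} (hn : 2 ≤ n) (hL : IsComplex L) (hconn : ConnCplx L)
    (hcharts : ∀ v ∈ verts L, ∃ f, IsChart L (nbrs L v) n f) {v a : V} (hva : EdgeRel L v a) :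
    verts L = nonNbrs L v a ∪ nbrs L v := by
  ext x
  constructor
  · intro hx
    induction hconn v (hva.symm'.right_mem hL) x hx with
    | refl => exact Or.inl ⟨hva.symm', fun h => h.1 rfl⟩
    | @tail b c _ hbc ih =>
      rcases ih (hbc.symm'.right_mem hL) with hb | hb
      · have h := nbrs_eq_of_mem_nonNbrs hn hL hcharts hva hb
        exact Or.inr (h ▸ hbc)
      · by_cases hvc : EdgeRel L v c
        · exact Or.inr hvc
        · exact Or.inl (nonNbrs_subset hn hL hcharts hb hva ⟨hbc, hvc⟩)
  · rintro (hx | hx)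
    · exact hx.1.right_mem hL
    · exact EdgeRel.right_mem hL hx

/-- The chart of `nbrs L v` extends to all vertices: the additional part is `nonNbrs L v a`, whose
three elements are numbered by the chart of `nbrs L a`. -/
theorem exists_chart_verts [Finite V] {n : ℕ} (hn : 2 ≤ n) (hL : IsComplex L) (hconn : ConnCplx L)
    (hcharts : ∀ v ∈ verts L, ∃ f, IsChart L (nbrs L v) n f) {v a : V} (hva : EdgeRel L v a) :
    ∃ F, IsChart L (verts L) (n + 1) F := by
  obtain ⟨g, hg⟩ := hcharts v (hva.symm'.right_mem hL)
  obtain ⟨f, hf⟩ := hcharts a (hva.right_mem hL)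
  have hT : ∀ x ∈ nonNbrs L v a, (f x).1 = (f v).1 := fun x hx =>
    (mem_nonNbrs_iff hf hva hx.1).1 hx
  have hTN : ∀ x ∈ nonNbrs L v a, ∀ y, EdgeRel L v y → EdgeRel L x y := fun x hx y hy => by
    have h := nbrs_eq_of_mem_nonNbrs hn hL hcharts hva hx
    have hy' : y ∈ nbrs L v := hy
    rw [← h] at hy'
    exact hy'
  let F : V → Fin (n + 1) × Fin 3 := fun x =>
    if EdgeRel L v x then ((g x).1.castSucc, (g x).2) else (Fin.last n, (f x).2)
  have hFN : ∀ x, EdgeRel L v x → F x = ((g x).1.castSucc, (g x).2) := fun x hx => if_pos hx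
  have hFT : ∀ x ∈ nonNbrs L v a, F x = (Fin.last n, (f x).2) := fun x hx => if_neg hx.2
  refine ⟨F, ⟨fun _ _ => Set.mem_univ _, ?_, ?_⟩, ?_⟩
  · intro x hx y hy hxy
    rw [verts_eq_union hn hL hconn hcharts hva] at hx hy
    rcases hx with hx | hx <;> rcases hy with hy | hy
    · rw [hFT x hx, hFT y hy] at hxy
      exact hf.bij.injOn hx.1 hy.1 (Prod.ext ((hT x hx).trans (hT y hy).symm) (Prod.ext_iff.1 hxy).2)
    · rw [hFT x hx, hFN y hy] at hxy
      exact absurd (Prod.ext_iff.1 hxy).1.symm (Fin.castSucc_ne_last _)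
    · rw [hFN x hx, hFT y hy] at hxy
      exact absurd (Prod.ext_iff.1 hxy).1 (Fin.castSucc_ne_last _)
    · rw [hFN x hx, hFN y hy] at hxy
      obtain ⟨h1, h2⟩ := Prod.ext_iff.1 hxy
      exact hg.bij.injOn hx hy (Prod.ext (Fin.castSucc_injective _ h1) h2)
  · rintro ⟨i, j⟩ -
    rw [verts_eq_union hn hL hconn hcharts hva]
    induction i using Fin.lastCases with
    | last =>
      obtain ⟨x, hx, hxe⟩ := hf.bij.surjOn (Set.mem_univ ((f v).1, j))
      have hxT : x ∈ nonNbrs L v a := (mem_nonNbrs_iff hf hva hx).2 (by rw [hxe])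
      exact ⟨x, Or.inl hxT, by rw [hFT x hxT, hxe]⟩
    | cast i =>
      obtain ⟨x, hx, hxe⟩ := hg.bij.surjOn (Set.mem_univ (i, j))
      exact ⟨x, Or.inr hx, by rw [hFN x hx, hxe]⟩
  · intro x hx y hy
    rw [verts_eq_union hn hL hconn hcharts hva] at hx hy
    rcases hx with hx | hx <;> rcases hy with hy | hy
    · rw [hFT x hx, hFT y hy, hf.adj x hx.1 y hy.1, hT x hx, hT y hy]
      simp
    · rw [hFT x hx, hFN y hy]
      exact iff_of_true (hTN x hx y hy) (Fin.castSucc_ne_last _).symm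
    · rw [hFN x hx, hFT y hy]
      exact iff_of_true (hTN y hy x hx).symm' (Fin.castSucc_ne_last _)
    · rw [hFN x hx, hFN y hy, hg.adj x hx y hy]
      exact (Fin.castSucc_injective n).ne_iff.symm

end

/-- Lemma `l:join3` of the paper: for `n ≥ 2`, a connected
`n`-dimensional (finite) flag simplicial complex all of whose vertex links are
isomorphic to `3^{*n}` is isomorphic to `3^{*(n+1)}`. -/
theorem eq_threeJoin_of_links
    {V : Type} [Fintype V] (L : SCplx V) (n : ℕ) (hn : 2 ≤ n)
    (hL : IsComplex L) (hflag : FlagCplx L) (hconn : ConnCplx L)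
    (hdim_le : ∀ s ∈ L, s.card ≤ n + 1) (hdim : ∃ s ∈ L, s.card = n + 1)
    (hlinks : ∀ v ∈ verts L, Isom (link L ({v} : Finset V)) (threeJoin n)) :
    Isom L (threeJoin (n + 1)) := by
  have hcharts : ∀ v ∈ verts L, ∃ f, IsChart L (nbrs L v) n f := fun v hv =>
    exists_chart_of_isom_link hL hflag (hlinks v hv)
  -- `L` has an edge, because its link at a vertex is non-empty
  obtain ⟨s, hs, -⟩ := hdim
  obtain ⟨v, hv⟩ := hL.1 s hs
  obtain ⟨f, hf⟩ := hcharts v (hL.2 s hs {v} (by simpa using hv) (by simp))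
  obtain ⟨a, hva, -⟩ := hf.bij.surjOn (Set.mem_univ (⟨0, by omega⟩, 0))
  obtain ⟨F, hF⟩ := exists_chart_verts hn hL hconn hcharts hva
  exact isom_of_chart hL hflag hF
end

section
/- Let L be a finite connected triangle-free simple graph in which every vertex has degree exactly 3, and suppose L is not isomorphic to the complete bipartite graph K_{3,3}. Assume that for every pair of distinct vertices a, b of L (whether adjacent or not), the subgraph induced on the complement of {a, b} is connected. Then there exist two non-adjacent vertices u and v of L such that the subgraph induced on the complement of the closed neighborhood N[u] is connected and the subgraph induced on the complement of the closed neighborhood N[v] is connected, where N[x] consists of x together with all vertices adjacent to x. -/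
/-!
Call a vertex *separating* when removing its closed star disconnects the graph.  A *fragment* at `x`
is a nonempty set `C` off `N[x]`, with no edge to the rest of the complement of `N[x]`, such that
the rest `(C ∪ N[x])ᶜ` is nonempty too; that rest is then again a fragment at `x`.  So `x` is
separating exactly when there is a fragment at `x`.

No two vertices separate, so every neighbour of `x` has a neighbour in `C` and one in the
rest; as it has degree 3, each of these is unique.

* Twins: suppose `u ≠ w` have the same neighbours.  A fragment at a neighbour `a` of `u` would
  contain exactly one of the other two neighbours `b`, `c` of `u`, say `b`, and would equal `{b}`, for
  otherwise `b` and the third neighbour of `a` separate.  Symmetrically the rest is `{c}`, and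
  the graph is `K_{3,3}`.  Hence no neighbour of `u` is separating, and two of them are the
  vertices sought (`not_frag_of_twin`).
* No twins: a vertex `y` of a fragment `C` at `x` is adjacent to at most one neighbour of `x`
  (`Frag.common_subsingleton`), so if `y` is separating, one of its fragments is a proper
  subset of `C` (`Frag.exists_smaller`).  By induction every fragment contains a nonseparating vertex.
  If some `x` is separating, such vertices in a fragment at `x` and in the rest are nonadjacent.
  If no vertex is separating, two neighbours of any vertex do.
-/

open scoped Classical

/-! ### Fragments -/

/-- A nonempty union `C` of components of the complement of the closed star of `x`, not all of it. -/
structure Frag {V : Type} (G : SimpleGraph V) (x : V) (C : Set V) : Prop where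
  nonempty : ∃ y, y ∈ C
  center : x ∉ C
  disj : ∀ y ∈ C, ¬ G.Adj x y
  closed : ∀ y ∈ C, ∀ t, G.Adj y t → t ∈ C ∨ G.Adj x t
  proper : ∃ z, z ∉ C ∧ z ≠ x ∧ ¬ G.Adj x z

/-- The rest of the complement of the closed star of `x`, once `C` is removed. -/
def rest {V : Type} (G : SimpleGraph V) (x : V) (C : Set V) : Set V :=
  {z | z ∉ C ∧ z ≠ x ∧ ¬ G.Adj x z}

lemma Frag.rest {V : Type} {G : SimpleGraph V} {x : V} {C : Set V} (h : Frag G x C) :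
    Frag G x (rest G x C) where
  nonempty := h.proper
  center := fun hx => hx.2.1 rfl
  disj := fun _ hy => hy.2.2
  closed := by
    intro y hy t hyt
    by_cases hxt : G.Adj x t
    · exact Or.inr hxt
    · refine Or.inl ⟨fun ht => ?_, ?_, hxt⟩
      · rcases h.closed t ht y hyt.symm with h1 | h1
        · exact hy.1 h1
        · exact hy.2.2 h1
      · rintro rfl
        exact hy.2.2 hyt.symm
  proper := by
    obtain ⟨y, hy⟩ := h.nonempty
    exact ⟨y, fun h1 => h1.1 hy, fun h1 => h.center (h1 ▸ hy), h.disj y hy⟩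

/-! ### Connectedness and boundaries -/

/-- A disconnected induced subgraph has a nonempty proper subset closed under adjacency. -/
lemma exists_closed_of_not_connected {V : Type} (G : SimpleGraph V) (S : Set V)
    (hne : S.Nonempty) (h : ¬ (G.induce S).Connected) :
    ∃ C : Set V, C ⊆ S ∧ C.Nonempty ∧ (∀ y ∈ C, ∀ t ∈ S, G.Adj y t → t ∈ C) ∧
      ∃ z ∈ S, z ∉ C := by
  have : ¬ (G.induce S).Preconnected := fun hp =>
    h (@SimpleGraph.Connected.mk _ _ hp ⟨⟨_, hne.some_mem⟩⟩)
  unfold SimpleGraph.Preconnected at this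
  push Not at this
  obtain ⟨a, b, hab⟩ := this
  refine ⟨{t | ∃ ht : t ∈ S, (G.induce S).Reachable a ⟨t, ht⟩}, fun t ht => ht.1,
    ⟨a, a.2, SimpleGraph.Reachable.refl _⟩, ?_, b, b.2, fun hb => hab hb.2⟩
  rintro y ⟨hy, hay⟩ t ht hyt
  refine ⟨ht, hay.trans (SimpleGraph.Adj.reachable ?_)⟩
  simpa using hyt

lemma mem_of_connected {V : Type} (G : SimpleGraph V) (S C : Set V)
    (h : (G.induce S).Connected) {y z : V} (hy : y ∈ C) (hyS : y ∈ S) (hz : z ∈ S)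
    (hC : ∀ y ∈ C, ∀ t ∈ S, G.Adj y t → t ∈ C) : z ∈ C := by
  obtain ⟨w⟩ := h.preconnected ⟨y, hyS⟩ ⟨z, hz⟩
  have key : ∀ (a b : S), (G.induce S).Walk a b → (a : V) ∈ C → (b : V) ∈ C := by
    intro a b w
    induction w with
    | nil => exact id
    | cons hadj _ ih => exact fun ha => ih (hC _ ha _ (Subtype.property _) (by simpa using hadj))
  exact key _ _ w hy

/-- No two vertices separate. -/
def NoSepPair {V : Type} (G : SimpleGraph V) : Prop :=
  ∀ a b : V, a ≠ b → (G.induce (({a, b} : Set V)ᶜ)).Connected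

/-- If no two vertices separate, no nonempty proper part of the complement of `{a, b}` has its
boundary in `{a, b}`. -/
lemma NoSepPair.false {V : Type} {G : SimpleGraph V} (hp : NoSepPair G)
    (S : Set V) (a b : V) (hab : a ≠ b) (ha : a ∉ S) (hb : b ∉ S) (y : V) (hy : y ∈ S)
    (z : V) (hz : z ∉ S) (hza : z ≠ a) (hzb : z ≠ b)
    (hS : ∀ s ∈ S, ∀ t, G.Adj s t → t ∈ S ∨ t = a ∨ t = b) : False := by
  refine hz (mem_of_connected G _ S (hp a b hab) hy ?_ ?_ ?_)
  · simp only [Set.mem_compl_iff, Set.mem_insert_iff, Set.mem_singleton_iff]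
    rintro (rfl | rfl) <;> contradiction
  · simp [hza, hzb]
  · intro s hs t ht hst
    have := hS s hs t hst
    simp only [Set.mem_compl_iff, Set.mem_insert_iff, Set.mem_singleton_iff] at ht
    tauto

/-! ### Trivalence -/

/-- Every vertex has exactly three neighbours, as distinct named vertices rather than a degree. -/
def IsTrivalent {V : Type} (G : SimpleGraph V) : Prop :=
  ∀ x, ∃ p q r, p ≠ q ∧ p ≠ r ∧ q ≠ r ∧ ∀ t, G.Adj x t ↔ t = p ∨ t = q ∨ t = r

lemma isTrivalent_of_degree {V : Type} [Fintype V] (G : SimpleGraph V)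
    (hdeg : ∀ v : V, G.degree v = 3) : IsTrivalent G := by
  intro x
  obtain ⟨p, q, r, h1, h2, h3, h⟩ := Finset.card_eq_three.mp (hdeg x)
  refine ⟨p, q, r, h1, h2, h3, fun t => ?_⟩
  rw [← SimpleGraph.mem_neighborFinset, h]
  simp

lemma IsTrivalent.others {V : Type} {G : SimpleGraph V} (h : IsTrivalent G) {x p : V}
    (hp : G.Adj x p) :
    ∃ q r, q ≠ p ∧ r ≠ p ∧ q ≠ r ∧ ∀ t, G.Adj x t ↔ t = p ∨ t = q ∨ t = r := by
  obtain ⟨a, b, c, h1, h2, h3, hN⟩ := h x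
  rcases (hN p).1 hp with rfl | rfl | rfl
  · exact ⟨b, c, h1.symm, h2.symm, h3, hN⟩
  · exact ⟨a, c, h1, h3.symm, h2, fun t => by rw [hN t]; tauto⟩
  · exact ⟨a, b, h2, h3, h1, fun t => by rw [hN t]; tauto⟩

lemma IsTrivalent.third {V : Type} {G : SimpleGraph V} (h : IsTrivalent G) {x p q : V}
    (hp : G.Adj x p) (hq : G.Adj x q) (hpq : p ≠ q) :
    ∃ r, r ≠ p ∧ r ≠ q ∧ ∀ t, G.Adj x t ↔ t = p ∨ t = q ∨ t = r := by
  obtain ⟨q', r', h1, h2, h3, hN⟩ := h.others hp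
  rcases (hN q).1 hq with rfl | rfl | rfl
  · exact absurd rfl hpq
  · exact ⟨r', h2, h3.symm, hN⟩
  · exact ⟨q', h1, h3, fun t => by rw [hN t]; tauto⟩

/-! ### Fragments in a graph without separating pairs -/

lemma Frag.exists_adj {V : Type} {G : SimpleGraph V} (hp : NoSepPair G) (hc : IsTrivalent G)
    {x : V} {C : Set V} (h : Frag G x C) {p : V} (hxp : G.Adj x p) : ∃ y ∈ C, G.Adj p y := by
  by_contra! hno
  obtain ⟨q, r, h1, h2, h3, hN⟩ := hc.others hxp
  obtain ⟨y, hy⟩ := h.nonempty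
  have hq : G.Adj x q := by grind
  have hr : G.Adj x r := by grind
  refine hp.false C q r h3 (fun hh => h.disj _ hh hq) (fun hh => h.disj _ hh hr) y hy x h.center
    hq.ne hr.ne ?_
  intro s hs t hst
  rcases h.closed s hs t hst with h4 | h4
  · exact Or.inl h4
  · rcases (hN t).1 h4 with rfl | h5
    · exact absurd hst.symm (hno s hs)
    · exact Or.inr h5

/-- A neighbour `p` of `x` has the three neighbours `x`, one in `C` and one in the rest. -/
lemma Frag.adj_unique {V : Type} {G : SimpleGraph V} (hp : NoSepPair G) (hc : IsTrivalent G)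
    {x : V} {C : Set V} (h : Frag G x C) {p : V} (hxp : G.Adj x p) {y z : V}
    (hy : y ∈ C) (hz : z ∈ C) (hpy : G.Adj p y) (hpz : G.Adj p z) : y = z := by
  obtain ⟨w, hw, hpw⟩ := h.rest.exists_adj hp hc hxp
  have hwy : w ≠ y := fun e => hw.1 (e ▸ hy)
  have hwz : w ≠ z := fun e => hw.1 (e ▸ hz)
  have hxy : x ≠ y := fun e => h.center (e ▸ hy)
  have hxz : x ≠ z := fun e => h.center (e ▸ hz)
  have hwx : w ≠ x := hw.2.1
  obtain ⟨r, h1, h2, hN⟩ := hc.third hxp.symm hpw hwx.symm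
  have := (hN y).1 hpy
  have := (hN z).1 hpz
  grind

/-- Without twins, a vertex of a fragment at `x` shares at most one neighbour with `x`: otherwise
it separates, together with the third neighbour of `x`. -/
lemma Frag.common_subsingleton {V : Type} {G : SimpleGraph V} (hp : NoSepPair G) (hc : IsTrivalent G)
    (hnt : ∀ u w : V, (∀ t, G.Adj u t → G.Adj w t) → u = w)
    {x : V} {C : Set V} (h : Frag G x C) {y p q : V} (hy : y ∈ C)
    (hxp : G.Adj x p) (hxq : G.Adj x q) (hyp : G.Adj y p) (hyq : G.Adj y q) : p = q := by
  by_contra hpq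
  obtain ⟨r, h1, h2, hN⟩ := hc.third hxp hxq hpq
  have hxr : G.Adj x r := (hN r).2 (by simp)
  by_cases hS : ∃ s, s ∈ C \ {y}
  · obtain ⟨s, hs⟩ := hS
    refine hp.false (C \ {y}) y r ?_ (by simp) (fun hh => h.disj _ hh.1 hxr) s hs x
      (fun hh => h.center hh.1) ?_ hxr.ne ?_
    · rintro rfl
      exact h.disj _ hy hxr
    · rintro rfl
      exact h.center hy
    · intro s hs t hst
      by_cases hty : t = y
      · exact Or.inr (Or.inl hty)
      rcases h.closed s hs.1 t hst with h4 | h4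
      · exact Or.inl ⟨h4, hty⟩
      · rcases (hN t).1 h4 with rfl | rfl | rfl
        · exact absurd (h.adj_unique hp hc hxp hs.1 hy hst.symm hyp.symm) hs.2
        · exact absurd (h.adj_unique hp hc hxq hs.1 hy hst.symm hyq.symm) hs.2
        · exact Or.inr (Or.inr rfl)
  · push Not at hS
    obtain ⟨s, hs, hrs⟩ := h.exists_adj hp hc hxr
    have hsy : s = y := by
      by_contra hne
      exact hS s ⟨hs, hne⟩
    have : x = y := by
      refine hnt x y fun t ht => ?_
      rcases (hN t).1 ht with rfl | rfl | rfl
      · exact hyp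
      · exact hyq
      · exact hsy ▸ hrs.symm
    exact h.center (this ▸ hy)

/-- A fragment at a vertex `y` of a fragment `C` at `x` lies in `C` as soon as it misses `x`: the
part outside `C` has its boundary in `N(x) ∩ N(y)`, which has at most one element. -/
lemma Frag.subset {V : Type} {G : SimpleGraph V} (hp : NoSepPair G) (hc : IsTrivalent G)
    (hnt : ∀ u w : V, (∀ t, G.Adj u t → G.Adj w t) → u = w)
    {x y : V} {C E : Set V} (h : Frag G x C) (hy : y ∈ C) (hE : Frag G y E) (hx : x ∉ E) :
    E ⊆ C := by
  intro s hsE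
  by_contra hsC
  obtain ⟨p, hxp, hpu⟩ : ∃ p, G.Adj x p ∧ ∀ t, G.Adj x t → G.Adj y t → t = p := by
    by_cases hex : ∃ p, G.Adj x p ∧ G.Adj y p
    · obtain ⟨p, h1, h2⟩ := hex
      exact ⟨p, h1, fun t h3 h4 => h.common_subsingleton hp hc hnt hy h3 h1 h4 h2⟩
    · obtain ⟨p, _, _, _, _, _, hN⟩ := hc x
      exact ⟨p, (hN p).2 (by simp), fun t h3 h4 => absurd ⟨t, h3, h4⟩ hex⟩
  have hxy : ¬ G.Adj y x := fun hh => h.disj y hy hh.symm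
  have hnE : ∀ t ∈ E, ¬ G.Adj x t := by
    intro t ht hxt
    rcases hE.closed t ht x hxt.symm with h1 | h1
    · exact hx h1
    · exact hxy h1
  refine hp.false (E \ C) p y ?_ (fun hh => hnE _ hh.1 hxp) (fun hh => hh.2 hy) s ⟨hsE, hsC⟩ x
    (fun hh => hx hh.1) hxp.ne (fun e => h.center (e ▸ hy)) ?_
  · rintro rfl
    exact h.disj _ hy hxp
  · intro s hs t hst
    have htC : t ∉ C := by
      intro htC
      rcases h.closed t htC s hst.symm with h1 | h1
      · exact hs.2 h1
      · exact hnE s hs.1 h1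
    rcases hE.closed s hs.1 t hst with h1 | h1
    · exact Or.inl ⟨h1, htC⟩
    · rcases h.closed y hy t h1 with h2 | h2
      · exact absurd h2 htC
      · exact Or.inr (Or.inl (hpu t h2 h1))

lemma Frag.exists_smaller {V : Type} {G : SimpleGraph V} (hp : NoSepPair G) (hc : IsTrivalent G)
    (hnt : ∀ u w : V, (∀ t, G.Adj u t → G.Adj w t) → u = w)
    {x y : V} {C E : Set V} (h : Frag G x C) (hy : y ∈ C) (hE : Frag G y E) :
    ∃ D, D ⊂ C ∧ Frag G y D := by
  have key : ∀ D, Frag G y D → x ∉ D → D ⊂ C := fun D hD hx =>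
    ⟨h.subset hp hc hnt hy hD hx, fun hh => hD.center (hh hy)⟩
  by_cases hx : x ∈ E
  · exact ⟨_, key _ hE.rest fun hh => hh.1 hx, hE.rest⟩
  · exact ⟨E, key E hE hx, hE⟩

lemma Frag.exists_nonsep {V : Type} [Finite V] {G : SimpleGraph V} (hp : NoSepPair G)
    (hc : IsTrivalent G) (hnt : ∀ u w : V, (∀ t, G.Adj u t → G.Adj w t) → u = w)
    (C : Set V) : ∀ x, Frag G x C → ∃ y ∈ C, ∀ D, ¬ Frag G y D := by
  induction C using WellFoundedLT.induction with
  | _ C ih =>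
    intro x h
    obtain ⟨y, hy⟩ := h.nonempty
    by_cases hE : ∃ E, Frag G y E
    · obtain ⟨E, hE⟩ := hE
      obtain ⟨D, hDC, hD⟩ := h.exists_smaller hp hc hnt hy hE
      obtain ⟨z, hz, hzn⟩ := ih D hDC y hD
      exact ⟨z, hDC.1 hz, hzn⟩
    · exact ⟨y, hy, fun D hD => hE ⟨D, hD⟩⟩

/-! ### Twins -/

/-- A cubic graph consisting of the neighbours of `a` and three vertices adjacent to all of them is
`K_{3,3}`. -/
lemma nonempty_iso_K33 {V : Type} [Fintype V] (G : SimpleGraph V)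
    (hdeg : ∀ v : V, G.degree v = 3) (htri : ∀ x y z, G.Adj x y → G.Adj x z → ¬ G.Adj y z)
    {a b c : V} (hab : a ≠ b) (hac : a ≠ c) (hbc : b ≠ c)
    (hV : ∀ t, ¬ G.Adj a t ↔ t = a ∨ t = b ∨ t = c)
    (hb : ∀ t, G.Adj a t ↔ G.Adj b t) (hcc : ∀ t, G.Adj a t ↔ G.Adj c t) :
    Nonempty (G ≃g completeBipartiteGraph (Fin 3) (Fin 3)) := by
  have hadj : ∀ s t, G.Adj s t ↔ (G.Adj a s ∧ ¬ G.Adj a t ∨ ¬ G.Adj a s ∧ G.Adj a t) := by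
    intro s t
    by_cases hs : G.Adj a s <;> by_cases ht : G.Adj a t
    · simpa [hs, ht] using htri a s t hs ht
    · simp only [hs, ht, not_false_eq_true, and_self, not_true_eq_false, or_false, iff_true]
      rcases (hV t).1 ht with rfl | rfl | rfl
      · exact hs.symm
      · exact ((hb s).1 hs).symm
      · exact ((hcc s).1 hs).symm
    · simp only [hs, ht, not_false_eq_true, and_self, not_true_eq_false, or_true, iff_true]
      rcases (hV s).1 hs with rfl | rfl | rfl
      · exact ht
      · exact (hb t).1 ht
      · exact (hcc t).1 ht
    · simp only [hs, ht, not_false_eq_true, and_false, false_and, or_false, iff_false]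
      rcases (hV s).1 hs with rfl | rfl | rfl
      · exact ht
      · exact fun hh => ht ((hb t).2 hh)
      · exact fun hh => ht ((hcc t).2 hh)
  have h1 : Fintype.card {t // G.Adj a t} = 3 := by
    rw [Fintype.card_subtype, ← hdeg a, ← SimpleGraph.card_neighborFinset_eq_degree]
    congr 1
    ext t
    simp
  have h2 : Fintype.card {t // ¬ G.Adj a t} = 3 := by
    rw [Fintype.card_subtype]
    have : (Finset.univ.filter fun t => ¬ G.Adj a t) = {a, b, c} := by
      ext t
      simp [hV]
    rw [this]
    exact Finset.card_eq_three.2 ⟨a, b, c, hab, hac, hbc, rfl⟩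
  let e1 : {t // G.Adj a t} ≃ Fin 3 := Fintype.equivFinOfCardEq h1
  let e2 : {t // ¬ G.Adj a t} ≃ Fin 3 := Fintype.equivFinOfCardEq h2
  let e := (Equiv.sumCompl (fun t => G.Adj a t)).symm.trans (Equiv.sumCongr e1 e2)
  refine ⟨⟨e, ?_⟩⟩
  intro s t
  rw [hadj]
  by_cases hs : G.Adj a s <;> by_cases ht : G.Adj a t <;>
    simp [e, hs, ht, Equiv.sumCompl_symm_apply_of_pos, Equiv.sumCompl_symm_apply_of_neg]

/-- If `u`, `w` are twins with neighbours `a`, `b`, `c`, a fragment at `a` containing `b` is `{b}`: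
otherwise `b` and the third neighbour of `a` separate. -/
lemma Frag.eq_of_twin {V : Type} {G : SimpleGraph V} (hp : NoSepPair G) {a b c u w d : V}
    {E : Set V} (hE : Frag G a E) (hbE : b ∈ E) (hcE : c ∉ E)
    (hu : ∀ t, G.Adj u t ↔ t = a ∨ t = b ∨ t = c) (hw : ∀ t, G.Adj w t → G.Adj u t)
    (ha : ∀ t, G.Adj a t ↔ t = u ∨ t = w ∨ t = d) : ∀ t ∈ E, t = b := by
  intro t ht
  by_contra htb
  have had : G.Adj a d := (ha d).2 (by simp)
  have hnotu : ∀ s ∈ E \ {b}, ¬ G.Adj u s := by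
    rintro s ⟨hs, hsb⟩ hus
    rcases (hu s).1 hus with rfl | rfl | rfl
    · exact hE.center hs
    · exact hsb rfl
    · exact hcE hs
  refine hp.false (E \ {b}) b d ?_ (by simp) (fun hh => hE.disj _ hh.1 had) t ⟨ht, htb⟩ a
    (fun hh => hE.center hh.1) (fun e => hE.center (e ▸ hbE)) had.ne ?_
  · rintro rfl
    exact hE.disj _ hbE had
  · intro s hs t hst
    by_cases htb : t = b
    · exact Or.inr (Or.inl htb)
    rcases hE.closed s hs.1 t hst with h1 | h1
    · exact Or.inl ⟨h1, htb⟩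
    · rcases (ha t).1 h1 with rfl | rfl | rfl
      · exact absurd hst.symm (hnotu s hs)
      · exact absurd (hw s hst.symm) (hnotu s hs)
      · exact Or.inr (Or.inr rfl)

lemma IsTrivalent.adj_iff_of_imp {V : Type} {G : SimpleGraph V} (hc : IsTrivalent G) {u w : V}
    (h : ∀ t, G.Adj u t → G.Adj w t) : ∀ t, G.Adj u t ↔ G.Adj w t := by
  obtain ⟨p, q, r, h1, h2, h3, hN⟩ := hc u
  obtain ⟨s, h4, h5, hM⟩ := hc.third (h p ((hN p).2 (by simp))) (h q ((hN q).2 (by simp))) h1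
  have := h r ((hN r).2 (by simp))
  grind

/-- Outside `K_{3,3}`, a neighbour of a vertex that has a twin is nonseparating. -/
lemma not_frag_of_twin {V : Type} [Fintype V] (G : SimpleGraph V)
    (hdeg : ∀ v : V, G.degree v = 3) (htri : ∀ x y z, G.Adj x y → G.Adj x z → ¬ G.Adj y z)
    (hK33 : ¬ Nonempty (G ≃g completeBipartiteGraph (Fin 3) (Fin 3)))
    (hp : NoSepPair G) {u w : V} (huw : u ≠ w) (h : ∀ t, G.Adj u t → G.Adj w t)
    {a : V} (hua : G.Adj u a) (E : Set V) : ¬ Frag G a E := by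
  intro hE0
  have hc := isTrivalent_of_degree G hdeg
  have h' : ∀ t, G.Adj w t → G.Adj u t := fun t => (hc.adj_iff_of_imp h t).2
  -- `u` has a neighbour on each side, and neither can be `a`
  obtain ⟨b, hbE, hub⟩ := hE0.exists_adj hp hc hua.symm
  obtain ⟨c, hcE, huc⟩ := hE0.rest.exists_adj hp hc hua.symm
  have hab : a ≠ b := fun e => hE0.center (e ▸ hbE)
  have hac : a ≠ c := hcE.2.1.symm
  have hbc : b ≠ c := fun e => hcE.1 (e ▸ hbE)
  have hu : ∀ t, G.Adj u t ↔ t = a ∨ t = b ∨ t = c := by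
    obtain ⟨r, _, _, hN⟩ := hc.third hua hub hab
    have := (hN c).1 huc
    grind
  obtain ⟨d, -, -, ha⟩ := hc.third hua.symm (h a hua).symm huw
  have hEb := hE0.eq_of_twin hp hbE hcE.1 hu h' ha
  have hEc := hE0.rest.eq_of_twin hp hcE (fun hh => hh.1 hbE) (fun t => by rw [hu t]; tauto) h' ha
  refine hK33 (nonempty_iso_K33 G hdeg htri hab hac hbc ?_ ?_ ?_)
  · intro t
    constructor
    · intro hat
      by_cases hta : t = a
      · exact Or.inl hta
      by_cases htE : t ∈ E
      · exact Or.inr (Or.inl (hEb t htE))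
      · exact Or.inr (Or.inr (hEc t ⟨htE, hta, hat⟩))
    · rintro (rfl | rfl | rfl)
      · exact G.loopless.irrefl _
      · exact hE0.disj _ hbE
      · exact hcE.2.2
  · intro t
    refine (hc.adj_iff_of_imp (u := b) (w := a) (fun t ht => ?_) t).symm
    refine (hE0.closed b hbE t ht).resolve_left fun hh => ?_
    exact ht.ne (hEb t hh).symm
  · intro t
    refine (hc.adj_iff_of_imp (u := c) (w := a) (fun t ht => ?_) t).symm
    refine (hE0.rest.closed c hcE t ht).resolve_left fun hh => ?_
    exact ht.ne (hEc t hh).symm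

/-! ### Nonseparating vertices -/

lemma connected_of_not_frag {V : Type} {G : SimpleGraph V} (hc : IsTrivalent G)
    (htri : ∀ x y z, G.Adj x y → G.Adj x z → ¬ G.Adj y z) {x : V} (h : ∀ D, ¬ Frag G x D) :
    (G.induce ((insert x (G.neighborSet x))ᶜ)).Connected := by
  by_contra hcon
  have hmem : ∀ t, t ∈ (insert x (G.neighborSet x))ᶜ ↔ t ≠ x ∧ ¬ G.Adj x t := by
    intro t
    simp
  -- a vertex at distance two from `x` lies off the closed star
  have hne : ((insert x (G.neighborSet x))ᶜ).Nonempty := by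
    obtain ⟨p, _, _, _, _, _, hN⟩ := hc x
    have hxp : G.Adj x p := (hN p).2 (by simp)
    obtain ⟨q, _, hqx, _, _, hM⟩ := hc.others hxp.symm
    exact ⟨q, (hmem q).2 ⟨hqx, htri p x q hxp.symm ((hM q).2 (by simp))⟩⟩
  obtain ⟨C, hCS, ⟨y, hy⟩, hcl, z, hz, hzC⟩ := exists_closed_of_not_connected G _ hne hcon
  refine h C ⟨⟨y, hy⟩, fun hx => ((hmem x).1 (hCS hx)).1 rfl, fun y hy => ((hmem y).1 (hCS hy)).2,
    fun y hy t hyt => ?_, z, hzC, (hmem z).1 hz⟩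
  by_cases hxt : G.Adj x t
  · exact Or.inr hxt
  · refine Or.inl (hcl y hy t ((hmem t).2 ⟨?_, hxt⟩) hyt)
    rintro rfl
    exact ((hmem y).1 (hCS hy)).2 hyt.symm


/-- the key geometric step in Theorem `t:trivalent` of the paper:
a finite connected triangle-free cubic graph, not isomorphic to `K_{3,3}`, in
which no pair of vertices separates, has two non-adjacent vertices whose closed
stars do not separate. -/
theorem exists_two_nonadjacent_nonseparating_stars
    {V : Type} [Fintype V] (G : SimpleGraph V)
    (hconn : G.Connected)
    (htf : G.CliqueFree 3)
    (hdeg : ∀ v : V, G.degree v = 3)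
    (hK33 : ¬ Nonempty (G ≃g completeBipartiteGraph (Fin 3) (Fin 3)))
    (hpairs : ∀ a b : V, a ≠ b →
      (G.induce (({a, b} : Set V)ᶜ)).Connected) :
    ∃ u v : V, u ≠ v ∧ ¬ G.Adj u v ∧
      (G.induce ((insert u (G.neighborSet u))ᶜ)).Connected ∧
      (G.induce ((insert v (G.neighborSet v))ᶜ)).Connected := by
  have hc := isTrivalent_of_degree G hdeg
  have htri : ∀ x y z, G.Adj x y → G.Adj x z → ¬ G.Adj y z := by
    intro x y z hxy hxz hyz
    exact htf {x, y, z} (SimpleGraph.is3Clique_triple_iff.2 ⟨hxy, hxz, hyz⟩)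
  -- it is enough to find two nonadjacent vertices without fragments
  suffices ∃ u v : V, u ≠ v ∧ ¬ G.Adj u v ∧ (∀ D, ¬ Frag G u D) ∧ (∀ D, ¬ Frag G v D) by
    obtain ⟨u, v, huv, hadj, hu, hv⟩ := this
    exact ⟨u, v, huv, hadj, connected_of_not_frag hc htri hu, connected_of_not_frag hc htri hv⟩
  have hpair : ∀ u : V, (∀ a, G.Adj u a → ∀ D, ¬ Frag G a D) →
      ∃ u v : V, u ≠ v ∧ ¬ G.Adj u v ∧ (∀ D, ¬ Frag G u D) ∧ (∀ D, ¬ Frag G v D) := by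
    intro u hu
    obtain ⟨p, q, r, hpq, _, _, hN⟩ := hc u
    have hup : G.Adj u p := (hN p).2 (by simp)
    have huq : G.Adj u q := (hN q).2 (by simp)
    exact ⟨p, q, hpq, htri u p q hup huq, hu p hup, hu q huq⟩
  by_cases htwin : ∀ u w : V, (∀ t, G.Adj u t → G.Adj w t) → u = w
  · by_cases hsep : ∃ x C, Frag G x C
    · obtain ⟨x, C, h⟩ := hsep
      obtain ⟨y, hy, hyn⟩ := Frag.exists_nonsep hpairs hc htwin C x h
      obtain ⟨z, hz, hzn⟩ := Frag.exists_nonsep hpairs hc htwin _ x h.rest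
      refine ⟨y, z, fun e => hz.1 (e ▸ hy), fun hyz => ?_, hyn, hzn⟩
      rcases h.closed y hy z hyz with h1 | h1
      · exact hz.1 h1
      · exact hz.2.2 h1
    · obtain ⟨x⟩ := hconn.nonempty
      exact hpair x fun a _ D hD => hsep ⟨a, D, hD⟩
  · push Not at htwin
    obtain ⟨u, w, h, huw⟩ := htwin
    exact hpair u fun a hua => not_frag_of_twin G hdeg htri hK33 hpairs huw h hua
end

section
/- Let R be a ring, D a division ring, φ: R → D a ring homomorphism, and ι: D → D' an injective ring homomorphism to another division ring D'. Let C be a chain complex of free left R-modules. Then for every n, the dimension of H_n(D' ⊗_R C) as a left D'-vector space equals the dimension of H_n(D ⊗_R C) as a left D-vector space, where D is a right R-module via φ and D' is a right R-module via ι ∘ φ. -/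
/-!
Extension of scalars `extendMap φ` is an additive functor on free modules with chosen bases, and
`extendMap (ι.comp φ) f = extendMap ι (extendMap φ f)`. Hence only a complex `A, B` of free
modules over the division ring `D` and its extension along `ι` matter.

Over a division ring a three-term complex `A : X → Y`, `B : Y → Z` splits: if `κ` indexes a basis of
its homology, there are `i : D^(κ) → Y`, `p : Y → D^(κ)`, `s : Y → X`, `t : Z → Y` with
`B i = 0`, `p A = 0`, `p i = 1` and `i p + A s + t B = 1` (`exists_homologySplitting`). These are
identities between linear maps, so the functor `extendMap ι` preserves them
(`HomologySplitting.extend`), and over any division ring they force the homology to be free on `κ`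
(`HomologySplitting.rank_homologyOf`). Both dimensions are therefore the cardinality of `κ`.
-/


noncomputable section

/-- Given a ring homomorphism `φ : R →+* D` and an `R`-linear map between free
left `R`-modules (with bases indexed by `I` and `J`), the induced `D`-linear map
between the corresponding free `D`-modules, i.e. the map `D ⊗_R f` under the
identifications `D ⊗_R (I →₀ R) ≅ (I →₀ D)`, where `D` is a right `R`-module
via `φ`. -/
def extendMap {R D : Type} [Ring R] [Ring D] (φ : R →+* D) {I J : Type}
    (f : (I →₀ R) →ₗ[R] (J →₀ R)) : (I →₀ D) →ₗ[D] (J →₀ D) :=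
  Finsupp.lsum ℕ fun i => LinearMap.toSpanSingleton D (J →₀ D)
    (Finsupp.mapRange φ φ.map_zero (f (Finsupp.single i 1)))

/-- The homology of a pair of composable linear maps `f : A → B`, `g : B → C`:
`ker g / (im f ∩ ker g)`. -/
abbrev homologyOf {D A B C : Type} [DivisionRing D]
    [AddCommGroup A] [Module D A] [AddCommGroup B] [Module D B]
    [AddCommGroup C] [Module D C] (f : A →ₗ[D] B) (g : B →ₗ[D] C) : Type :=
  ↥(LinearMap.ker g) ⧸ Submodule.comap (LinearMap.ker g).subtype (LinearMap.range f)

theorem extendMap_single {R D : Type} [Ring R] [Ring D] (φ : R →+* D) {I J : Type}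
    (f : (I →₀ R) →ₗ[R] (J →₀ R)) (i : I) (c : D) :
    extendMap φ f (Finsupp.single i c) =
      c • Finsupp.mapRange φ φ.map_zero (f (Finsupp.single i 1)) := by
  simp [extendMap]

/-- `extendMap φ f` extends `f` along the coordinatewise map `(I →₀ R) → (I →₀ D)`. -/
theorem extendMap_mapRange {R D : Type} [Ring R] [Ring D] (φ : R →+* D) {I J : Type}
    (f : (I →₀ R) →ₗ[R] (J →₀ R)) (x : I →₀ R) :
    extendMap φ f (Finsupp.mapRange φ φ.map_zero x) = Finsupp.mapRange φ φ.map_zero (f x) := by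
  induction x using Finsupp.induction_linear with
  | zero => simp
  | add x y hx hy =>
    rw [Finsupp.mapRange_add (map_add φ), map_add, map_add, hx, hy,
      Finsupp.mapRange_add (map_add φ)]
  | single i r =>
    have h : f (Finsupp.single i r) = r • f (Finsupp.single i 1) := by
      rw [← map_smul, Finsupp.smul_single, smul_eq_mul, mul_one]
    rw [Finsupp.mapRange_single, extendMap_single, h]
    ext j
    simp

theorem extendMap_comp {R D : Type} [Ring R] [Ring D] (φ : R →+* D) {I J K : Type}
    (g : (J →₀ R) →ₗ[R] (K →₀ R)) (f : (I →₀ R) →ₗ[R] (J →₀ R)) :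
    extendMap φ (g ∘ₗ f) = extendMap φ g ∘ₗ extendMap φ f := by
  refine Finsupp.lhom_ext fun i c => ?_
  rw [LinearMap.comp_apply, extendMap_single, extendMap_single, map_smul, extendMap_mapRange,
    LinearMap.comp_apply]

theorem extendMap_id {R D : Type} [Ring R] [Ring D] (φ : R →+* D) {I : Type} :
    extendMap φ (LinearMap.id : (I →₀ R) →ₗ[R] (I →₀ R)) = LinearMap.id := by
  refine Finsupp.lhom_ext fun i c => ?_
  simp [extendMap_single]

theorem extendMap_zero {R D : Type} [Ring R] [Ring D] (φ : R →+* D) {I J : Type} :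
    extendMap φ (0 : (I →₀ R) →ₗ[R] (J →₀ R)) = 0 := by
  refine Finsupp.lhom_ext fun i c => ?_
  simp [extendMap_single]

theorem extendMap_add {R D : Type} [Ring R] [Ring D] (φ : R →+* D) {I J : Type}
    (f g : (I →₀ R) →ₗ[R] (J →₀ R)) :
    extendMap φ (f + g) = extendMap φ f + extendMap φ g := by
  refine Finsupp.lhom_ext fun i c => ?_
  simp [extendMap_single, Finsupp.mapRange_add (map_add φ)]

theorem extendMap_ringHom_comp {R D D' : Type} [Ring R] [Ring D] [Ring D'] (φ : R →+* D)
    (ι : D →+* D') {I J : Type} (f : (I →₀ R) →ₗ[R] (J →₀ R)) :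
    extendMap (ι.comp φ) f = extendMap ι (extendMap φ f) := by
  refine Finsupp.lhom_ext fun i c => ?_
  rw [extendMap_single, extendMap_single, extendMap_single, one_smul]
  ext j
  simp

/-- A splitting of the pair `A : X → Y`, `B : Y → Z` of linear maps whose homology part is free on `κ`.
It is phrased purely by identities between linear maps, so that additive functors preserve it. -/
structure HomologySplitting {D : Type} [Ring D] {X Y Z : Type} [AddCommGroup X] [Module D X]
    [AddCommGroup Y] [Module D Y] [AddCommGroup Z] [Module D Z]
    (A : X →ₗ[D] Y) (B : Y →ₗ[D] Z) (κ : Type) where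
  /-- Representing cycles. -/
  i : (κ →₀ D) →ₗ[D] Y
  /-- Projection to the homology part. -/
  p : Y →ₗ[D] (κ →₀ D)
  /-- The homotopy lifting boundaries along `A`. -/
  s : Y →ₗ[D] X
  /-- The homotopy splitting `B` off the cycles. -/
  t : Z →ₗ[D] Y
  B_i : B ∘ₗ i = 0
  p_A : p ∘ₗ A = 0
  p_i : p ∘ₗ i = LinearMap.id
  total : i ∘ₗ p + A ∘ₗ s + t ∘ₗ B = LinearMap.id

/-- Extension of scalars preserves splittings. -/
def HomologySplitting.extend {D D' : Type} [Ring D] [Ring D'] (ι : D →+* D') {X Y Z κ : Type}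
    {A : (X →₀ D) →ₗ[D] (Y →₀ D)} {B : (Y →₀ D) →ₗ[D] (Z →₀ D)}
    (S : HomologySplitting A B κ) :
    HomologySplitting (extendMap ι A) (extendMap ι B) κ where
  i := extendMap ι S.i
  p := extendMap ι S.p
  s := extendMap ι S.s
  t := extendMap ι S.t
  B_i := by rw [← extendMap_comp, S.B_i, extendMap_zero]
  p_A := by rw [← extendMap_comp, S.p_A, extendMap_zero]
  p_i := by rw [← extendMap_comp, S.p_i, extendMap_id]
  total := by
    rw [← extendMap_comp, ← extendMap_comp, ← extendMap_comp, ← extendMap_add, ← extendMap_add,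
      S.total, extendMap_id]

/-- The projection `p`, restricted to cycles, is onto with kernel the boundaries, so the homology
is free on `κ`. -/
theorem HomologySplitting.rank_homologyOf {D : Type} [DivisionRing D]
    {X Y Z : Type} [AddCommGroup X] [Module D X]
    [AddCommGroup Y] [Module D Y] [AddCommGroup Z] [Module D Z] {κ : Type}
    {A : X →ₗ[D] Y} {B : Y →ₗ[D] Z} (S : HomologySplitting A B κ) :
    Module.rank D (homologyOf A B) = Cardinal.mk κ := by
  let q : LinearMap.ker B →ₗ[D] (κ →₀ D) := S.p ∘ₗ (LinearMap.ker B).subtype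
  have hq : Function.Surjective q := fun y =>
    ⟨⟨S.i y, LinearMap.congr_fun S.B_i y⟩, LinearMap.congr_fun S.p_i y⟩
  have hker : Submodule.comap (LinearMap.ker B).subtype (LinearMap.range A)
      = LinearMap.ker q := by
    ext ⟨x, hx⟩
    constructor
    · rintro ⟨y, hy⟩
      have h := LinearMap.congr_fun S.p_A y
      rw [LinearMap.comp_apply, hy] at h
      exact h
    · intro h
      have hp : S.p x = 0 := h
      have hB : B x = 0 := hx
      have h1 := LinearMap.congr_fun S.total x
      simp only [LinearMap.add_apply, LinearMap.comp_apply, hp, hB, map_zero, zero_add, add_zero,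
        LinearMap.id_apply] at h1
      exact ⟨S.s x, h1⟩
  have e : homologyOf A B ≃ₗ[D] (κ →₀ D) :=
    (Submodule.quotEquivOfEq _ _ hker).trans (q.quotKerEquivOfSurjective hq)
  rw [e.rank_eq, rank_finsupp_self, Cardinal.lift_id]

/-- Over a division ring every linear map has a generalized inverse. -/
theorem exists_comp_comp_eq_self {D V W : Type} [DivisionRing D] [AddCommGroup V] [Module D V]
    [AddCommGroup W] [Module D W] (f : V →ₗ[D] W) : ∃ g : W →ₗ[D] V, ∀ x, f (g (f x)) = f x := by
  obtain ⟨r, hr⟩ := (LinearMap.range f).subtype.exists_leftInverse_of_injective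
    (Submodule.ker_subtype _)
  obtain ⟨σ, hσ⟩ := f.rangeRestrict.exists_rightInverse_of_surjective
    (LinearMap.range_rangeRestrict f)
  refine ⟨σ ∘ₗ r, fun x => ?_⟩
  have h1 : r (f x) = f.rangeRestrict x := LinearMap.congr_fun hr (f.rangeRestrict x)
  have h2 := congrArg Subtype.val (LinearMap.congr_fun hσ (f.rangeRestrict x))
  rw [LinearMap.comp_apply, h1]
  exact h2

/-- Complements of the cycles in `Y` and of the boundaries in the cycles, together with a basis of
the homology, split the complex. -/
theorem exists_homologySplitting {D : Type} [DivisionRing D]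
    {X Y Z : Type} [AddCommGroup X] [Module D X]
    [AddCommGroup Y] [Module D Y] [AddCommGroup Z] [Module D Z]
    (A : X →ₗ[D] Y) (B : Y →ₗ[D] Z) (hBA : B ∘ₗ A = 0) :
    ∃ κ : Type, Nonempty (HomologySplitting A B κ) := by
  obtain ⟨N, hN⟩ : ∃ N : Submodule D (LinearMap.ker B),
      N = Submodule.comap (LinearMap.ker B).subtype (LinearMap.range A) := ⟨_, rfl⟩
  let b := Module.Basis.ofVectorSpace D (LinearMap.ker B ⧸ N)
  obtain ⟨A', hA'⟩ := exists_comp_comp_eq_self A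
  obtain ⟨B', hB'⟩ := exists_comp_comp_eq_self B
  obtain ⟨σ, hσ⟩ := LinearMap.exists_rightInverse_of_surjective N.mkQ (Submodule.range_mkQ N)
  -- `1 - B' B` is a projection of `Y` onto the cycles.
  let r : Y →ₗ[D] LinearMap.ker B :=
    LinearMap.codRestrict (LinearMap.ker B) (LinearMap.id - B' ∘ₗ B) fun x => by
      simp [hB']
  have hr : ∀ x : LinearMap.ker B, r x = x := fun x => by
    ext1
    simp [r]
  refine ⟨_, ⟨{
    i := (LinearMap.ker B).subtype ∘ₗ σ ∘ₗ b.repr.symm.toLinearMap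
    p := b.repr.toLinearMap ∘ₗ N.mkQ ∘ₗ r
    s := A' ∘ₗ ((LinearMap.ker B).subtype ∘ₗ r
      - (LinearMap.ker B).subtype ∘ₗ σ ∘ₗ N.mkQ ∘ₗ r)
    t := B'
    B_i := ?_
    p_A := ?_
    p_i := ?_
    total := ?_ }⟩⟩
  · refine LinearMap.ext fun x => ?_
    exact (σ (b.repr.symm x)).2
  · refine LinearMap.ext fun x => ?_
    have h1 : r (A x) = ⟨A x, LinearMap.congr_fun hBA x⟩ := hr ⟨A x, _⟩
    have h2 : N.mkQ (r (A x)) = 0 := by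
      rw [h1, Submodule.mkQ_apply, Submodule.Quotient.mk_eq_zero, hN]
      exact ⟨x, rfl⟩
    simp only [LinearMap.comp_apply, h2, map_zero, LinearMap.zero_apply]
  · refine LinearMap.ext fun x => ?_
    have h2 := LinearMap.congr_fun hσ (b.repr.symm x)
    simp only [LinearMap.comp_apply, LinearMap.id_apply] at h2
    simp only [LinearMap.comp_apply, Submodule.subtype_apply, hr, h2, LinearMap.id_apply,
      LinearEquiv.coe_coe, LinearEquiv.apply_symm_apply]
  · refine LinearMap.ext fun x => ?_
    -- A cycle and the chosen representative of its class differ by a boundary.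
    have h1 : r x - σ (N.mkQ (r x)) ∈ N := by
      rw [← Submodule.Quotient.mk_eq_zero, ← Submodule.mkQ_apply, map_sub]
      have h2 := LinearMap.congr_fun hσ (N.mkQ (r x))
      simp only [LinearMap.comp_apply, LinearMap.id_apply] at h2
      rw [h2, sub_self]
    obtain ⟨y, hy⟩ := hN.le h1
    have hy' : (r x : Y) - σ (N.mkQ (r x)) = A y := hy.symm
    have hx : (r x : Y) = x - B' (B x) := rfl
    simp only [LinearMap.add_apply, LinearMap.comp_apply, LinearMap.sub_apply,
      Submodule.subtype_apply, LinearMap.id_apply, LinearEquiv.coe_coe,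
      LinearEquiv.symm_apply_apply]
    rw [hy', hA', ← hy', hx]
    abel

/-- STATEMENT 16 (Lemma 2.1(3) of the paper): let `R` be a ring, `D` a division
ring, `φ : R → D` a ring homomorphism and `ι : D → D'` an injective ring
homomorphism to another division ring.  For any chain complex `C` of free left
`R`-modules (with `C_n = I_n →₀ R` and differentials `d n : C_{n+1} → C_n`),
the dimension of `H_n(D' ⊗_R C)` over `D'` equals the dimension of
`H_n(D ⊗_R C)` over `D`, for every `n`. -/
theorem rank_homology_extend_eq
    {R D D' : Type} [Ring R] [DivisionRing D] [DivisionRing D']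
    (φ : R →+* D) (ι : D →+* D') (hι : Function.Injective ι)
    (I : ℤ → Type) (d : (n : ℤ) → ((I (n + 1)) →₀ R) →ₗ[R] ((I n) →₀ R))
    (hdd : ∀ n : ℤ, (d n).comp (d (n + 1)) = 0) (n : ℤ) :
    Module.rank D'
        (homologyOf (extendMap (ι.comp φ) (d (n + 1))) (extendMap (ι.comp φ) (d n))) =
      Module.rank D
        (homologyOf (extendMap φ (d (n + 1))) (extendMap φ (d n))) := by
  have hBA : extendMap φ (d n) ∘ₗ extendMap φ (d (n + 1)) = 0 := by
    rw [← extendMap_comp, hdd, extendMap_zero]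
  obtain ⟨κ, ⟨S⟩⟩ := exists_homologySplitting _ _ hBA
  rw [S.rank_homologyOf, extendMap_ringHom_comp, extendMap_ringHom_comp,
    (S.extend ι).rank_homologyOf]

end
end
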